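/- Let F : ℝᵖ → ℝ be twice continuously differentiable, let x* ∈ ℝᵖ satisfy ∇F(x*) = 0 with ∇²F(x*) positive definite, and suppose ∇²F is L-Lipschitz in a neighborhood of x*. Let 0 ≤ γ < 1, c > 0, and let (x^t) satisfy x^{t+1} = x^t − v^t with ‖∇²F(x^t)v^t − ∇F(x^t)‖ ≤ γ_t‖∇F(x^t)‖, where 0 ≤ γ_t ≤ min(γ, c‖∇F(x^t)‖) for all t. Then there exist δ > 0 and C' > 0 such that whenever ‖x⁰ − x*‖ ≤ δ, the sequence (x^t) converges to x* quadratically: x^t → x* and ‖∇²F(x*)(x^{t+1} − x*)‖ ≤ C'‖∇²F(x*)(x^t − x*)‖² for all t. -/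

import Mathlib

open RealInnerProductSpace Filter

/-!
Let `G` vanish at `a`, with derivative `A = G' a` bounded below and `G' x - A = O(x - a)`. Write
`x⁺` for the iterate following `x`. The identity
`A (x⁺ - a) = (G' x - A) (x - x⁺) - (G' x (x - x⁺) - G x) - (G x - A (x - a))`
expresses the new error through the variation of the derivative, the residual of the Newton
equation and the remainder of the linearisation. The last two are `O(‖x - a‖ ^ 2)`, and so is the
first up to a term `o(1) ‖x⁺ - a‖`, which is absorbed into the left side because `A` is bounded
below. Near `a` the resulting quadratic estimate contracts the error by a factor `1 / 2`, so the
iterates stay in the region where it holds and converge to `a`. For minimisation, `G = ∇F`.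
-/

open Asymptotics Metric
open scoped Topology NNReal

section Sequences

variable {X : Type*} [PseudoMetricSpace X] {x : ℕ → X} {a : X} {q δ : ℝ}

theorem dist_le_of_dist_succ_le_mul (hq : q ≤ 1) (h₀ : dist (x 0) a ≤ δ)
    (h : ∀ t, dist (x t) a ≤ δ → dist (x (t + 1)) a ≤ q * dist (x t) a) (t : ℕ) :
    dist (x t) a ≤ δ := by
  induction t with
  | zero => exact h₀
  | succ t ih => exact (h t ih).trans ((mul_le_of_le_one_left dist_nonneg hq).trans ih)

theorem tendsto_of_dist_succ_le_mul (hq₀ : 0 ≤ q) (hq₁ : q < 1) (h₀ : dist (x 0) a ≤ δ)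
    (h : ∀ t, dist (x t) a ≤ δ → dist (x (t + 1)) a ≤ q * dist (x t) a) :
    Tendsto x atTop (𝓝 a) := by
  have hgeom (t : ℕ) : dist (x t) a ≤ q ^ t * dist (x 0) a :=
    le_geom (u := fun k ↦ dist (x k) a) hq₀ t fun k _ ↦
      h k (dist_le_of_dist_succ_le_mul hq₁.le h₀ h k)
  refine tendsto_iff_dist_tendsto_zero.2 (squeeze_zero (fun _ ↦ dist_nonneg) hgeom ?_)
  simpa using (tendsto_pow_atTop_nhds_zero_of_lt_one hq₀ hq₁).mul_const (dist (x 0) a)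

end Sequences

theorem norm_apply_sub_le_residual_add {𝕜 E F : Type*} [NontriviallyNormedField 𝕜]
    [SeminormedAddCommGroup E] [NormedSpace 𝕜 E] [SeminormedAddCommGroup F] [NormedSpace 𝕜 F]
    (A H : E →L[𝕜] F) (g : F) (e s : E) :
    ‖A (e - s)‖ ≤ ‖H s - g‖ + ‖g - A e‖ + ‖H - A‖ * ‖s‖ := by
  have hsplit : A (e - s) = (H - A) s - (H s - g) - (g - A e) := by
    simp only [map_sub, sub_apply]
    abel
  calc ‖A (e - s)‖ ≤ ‖(H - A) s‖ + ‖H s - g‖ + ‖g - A e‖ := by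
        rw [hsplit]
        exact (norm_sub_le _ _).trans (by gcongr; exact norm_sub_le _ _)
    _ ≤ ‖H - A‖ * ‖s‖ + ‖H s - g‖ + ‖g - A e‖ := by gcongr; exact (H - A).le_opNorm s
    _ = ‖H s - g‖ + ‖g - A e‖ + ‖H - A‖ * ‖s‖ := by ring

theorem norm_apply_sub_le_of_antilipschitzWith {𝕜 E F : Type*} [NontriviallyNormedField 𝕜]
    [SeminormedAddCommGroup E] [NormedSpace 𝕜 E] [SeminormedAddCommGroup F] [NormedSpace 𝕜 F]
    {A H : E →L[𝕜] F} {κ : ℝ≥0} (hA : AntilipschitzWith κ A) (hH : ‖H - A‖ * κ ≤ 1 / 2)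
    (g : F) (e s : E) :
    ‖A (e - s)‖ ≤ 2 * (‖H s - g‖ + ‖g - A e‖ + ‖H - A‖ * ‖e‖) := by
  have hs : ‖s‖ ≤ ‖e‖ + κ * ‖A (e - s)‖ := calc
    ‖s‖ = ‖e - (e - s)‖ := by rw [sub_sub_cancel]
    _ ≤ ‖e‖ + ‖e - s‖ := norm_sub_le _ _
    _ ≤ ‖e‖ + κ * ‖A (e - s)‖ := by gcongr; exact A.bound_of_antilipschitz hA _
  have habsorb : ‖H - A‖ * ‖s‖ ≤ ‖H - A‖ * ‖e‖ + 1 / 2 * ‖A (e - s)‖ := calc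
    ‖H - A‖ * ‖s‖ ≤ ‖H - A‖ * (‖e‖ + κ * ‖A (e - s)‖) := by gcongr
    _ = ‖H - A‖ * ‖e‖ + ‖H - A‖ * κ * ‖A (e - s)‖ := by ring
    _ ≤ ‖H - A‖ * ‖e‖ + 1 / 2 * ‖A (e - s)‖ := by gcongr
  linarith [norm_apply_sub_le_residual_add A H g e s]

section InexactNewton

variable {𝕜 E F : Type*} [RCLike 𝕜] [NormedAddCommGroup E] [NormedSpace 𝕜 E]
  [NormedAddCommGroup F] [NormedSpace 𝕜 F] {G : E → F} {G' : E → E →L[𝕜] F} {a : E}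

theorem isBigO_linearization_error_of_isBigO_fderiv_sub
    (hG : ∀ᶠ x in 𝓝 a, HasFDerivAt G (G' x) x)
    (hG' : (fun x ↦ G' x - G' a) =O[𝓝 a] fun x ↦ x - a) :
    (fun x ↦ G x - G a - G' a (x - a)) =O[𝓝 a] fun x ↦ ‖x - a‖ ^ 2 := by
  obtain ⟨C, hC, hbound⟩ := hG'.exists_nonneg
  obtain ⟨r, hr, hball⟩ := eventually_nhds_iff_ball.1 (hG.and hbound.bound)
  refine .of_bound C (eventually_of_mem (ball_mem_nhds a hr) fun x hx ↦ ?_)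
  let : NormedSpace ℝ E := .restrictScalars ℝ 𝕜 E
  have hsegment : segment ℝ a x ⊆ ball a r :=
    (convex_ball a r).segment_subset (mem_ball_self hr) hx
  have hderiv : ∀ y ∈ segment ℝ a x, ‖G' y - G' a‖ ≤ C * ‖x - a‖ := fun y hy ↦
    (hball y (hsegment hy)).2.trans <|
      mul_le_mul_of_nonneg_left (norm_sub_le_of_mem_segment hy) hC
  calc ‖G x - G a - G' a (x - a)‖ ≤ C * ‖x - a‖ * ‖x - a‖ :=
        (convex_segment a x).norm_image_sub_le_of_norm_hasFDerivWithin_le'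
          (fun y hy ↦ (hball y (hsegment hy)).1.hasFDerivWithinAt) hderiv
          (left_mem_segment ℝ a x) (right_mem_segment ℝ a x)
    _ = C * ‖‖x - a‖ ^ 2‖ := by rw [norm_pow, norm_norm]; ring

theorem exists_eventually_norm_inexact_newton_step_le {κ : ℝ≥0}
    (hG : ∀ᶠ x in 𝓝 a, HasFDerivAt G (G' x) x)
    (hG' : (fun x ↦ G' x - G' a) =O[𝓝 a] fun x ↦ x - a)
    (ha : G a = 0) (hA : AntilipschitzWith κ (G' a)) (c : ℝ) :
    ∃ C > 0, ∀ᶠ x in 𝓝 a, ∀ y, ‖G' x (x - y) - G x‖ ≤ c * ‖G x‖ ^ 2 →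
      ‖G' a (y - a)‖ ≤ C * ‖x - a‖ ^ 2 := by
  have hlin : (fun x ↦ G x - G' a (x - a)) =O[𝓝 a] fun x ↦ ‖x - a‖ ^ 2 := by
    simpa only [ha, sub_zero] using isBigO_linearization_error_of_isBigO_fderiv_sub hG hG'
  have hres : (fun x ↦ c * ‖G x‖ ^ 2) =O[𝓝 a] fun x ↦ ‖x - a‖ ^ 2 := by
    have hO : G =O[𝓝 a] fun x ↦ x - a := by
      simpa only [ha, sub_zero] using hG.self_of_nhds.isBigO_sub
    exact (hO.norm_norm.pow 2).const_mul_left c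
  have hvar : (fun x ↦ ‖G' x - G' a‖ * ‖x - a‖) =O[𝓝 a] fun x ↦ ‖x - a‖ ^ 2 := by
    simpa only [pow_two] using hG'.norm_norm.mul (isBigO_refl (fun x ↦ ‖x - a‖) (𝓝 a))
  have hsmall : ∀ᶠ x in 𝓝 a, ‖G' x - G' a‖ * κ < 1 / 2 := by
    have hlim : Tendsto (fun x ↦ G' x - G' a) (𝓝 a) (𝓝 0) :=
      hG'.trans_tendsto (tendsto_sub_nhds_zero_iff.2 tendsto_id)
    exact (hlim.norm.mul_const (κ : ℝ)).eventually_lt_const (by simp)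
  obtain ⟨C, hC, hsum⟩ := ((hres.add hlin.norm_left).add hvar).exists_pos
  refine ⟨2 * C, by positivity, ?_⟩
  filter_upwards [hsum.bound, hsmall] with x hsum hsmall y hy
  rw [norm_pow, norm_norm] at hsum
  calc ‖G' a (y - a)‖ = ‖G' a ((x - a) - (x - y))‖ := by rw [sub_sub_sub_cancel_left]
    _ ≤ 2 * (‖G' x (x - y) - G x‖ + ‖G x - G' a (x - a)‖ + ‖G' x - G' a‖ * ‖x - a‖) :=
      norm_apply_sub_le_of_antilipschitzWith hA hsmall.le ..
    _ ≤ 2 * (c * ‖G x‖ ^ 2 + ‖G x - G' a (x - a)‖ + ‖G' x - G' a‖ * ‖x - a‖) := by gcongr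
    _ ≤ 2 * (C * ‖x - a‖ ^ 2) := by gcongr; exact (le_abs_self _).trans hsum
    _ = 2 * C * ‖x - a‖ ^ 2 := by ring

theorem inexact_newton_quadratic_convergence_general {κ : ℝ≥0}
    (hG : ∀ᶠ x in 𝓝 a, HasFDerivAt G (G' x) x)
    (hG' : (fun x ↦ G' x - G' a) =O[𝓝 a] fun x ↦ x - a)
    (ha : G a = 0) (hA : AntilipschitzWith κ (G' a)) (c : ℝ) :
    ∃ δ > 0, ∃ C > 0, ∀ x : ℕ → E,
      (∀ t, ‖G' (x t) (x t - x (t + 1)) - G (x t)‖ ≤ c * ‖G (x t)‖ ^ 2) →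
      ‖x 0 - a‖ ≤ δ →
      Tendsto x atTop (𝓝 a) ∧
        ∀ t, ‖G' a (x (t + 1) - a)‖ ≤ C * ‖G' a (x t - a)‖ ^ 2 := by
  obtain ⟨C, hC, hstep⟩ := exists_eventually_norm_inexact_newton_step_le hG hG' ha hA c
  have hbelow (v : E) : ‖v‖ ≤ κ * ‖G' a v‖ := (G' a).bound_of_antilipschitz hA v
  have hsmall : ∀ᶠ x in 𝓝 a, κ * C * ‖x - a‖ < 1 / 2 :=
    ContinuousAt.eventually_lt (by fun_prop) continuousAt_const (by simp)
  obtain ⟨δ, hδ, hnear⟩ := nhds_basis_closedBall.eventually_iff.1 (hstep.and hsmall)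
  simp only [mem_closedBall] at hnear
  -- `κ` may vanish, hence `κ + 1` in a constant that has to be positive.
  refine ⟨δ, hδ, C * (κ + 1) ^ 2, by positivity, fun x hx h₀ ↦ ?_⟩
  rw [← dist_eq_norm] at h₀
  have hhalf (t : ℕ) (ht : dist (x t) a ≤ δ) :
      dist (x (t + 1)) a ≤ 1 / 2 * dist (x t) a := by
    simp only [dist_eq_norm]
    calc ‖x (t + 1) - a‖ ≤ κ * ‖G' a (x (t + 1) - a)‖ := hbelow _
      _ ≤ κ * (C * ‖x t - a‖ ^ 2) := by gcongr; exact (hnear ht).1 _ (hx t)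
      _ = κ * C * ‖x t - a‖ * ‖x t - a‖ := by ring
      _ ≤ 1 / 2 * ‖x t - a‖ := by gcongr; exact (hnear ht).2.le
  refine ⟨tendsto_of_dist_succ_le_mul (by norm_num) (by norm_num) h₀ hhalf, fun t ↦ ?_⟩
  have ht : dist (x t) a ≤ δ := dist_le_of_dist_succ_le_mul (by norm_num) h₀ hhalf t
  calc ‖G' a (x (t + 1) - a)‖ ≤ C * ‖x t - a‖ ^ 2 := (hnear ht).1 _ (hx t)
    _ ≤ C * ((κ + 1) * ‖G' a (x t - a)‖) ^ 2 := by
      gcongr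
      exact (hbelow _).trans (by gcongr; simp)
    _ = C * (κ + 1) ^ 2 * ‖G' a (x t - a)‖ ^ 2 := by ring

end InexactNewton

theorem exists_antilipschitzWith_of_inner_apply_ne_zero {𝕜 E : Type*} [RCLike 𝕜]
    [NormedAddCommGroup E] [InnerProductSpace 𝕜 E] [FiniteDimensional 𝕜 E] {A : E →L[𝕜] E}
    (hA : ∀ y, y ≠ 0 → inner 𝕜 y (A y) ≠ 0) : ∃ κ, AntilipschitzWith κ A := by
  have hker : LinearMap.ker (A : E →ₗ[𝕜] E) = ⊥ :=
    LinearMap.ker_eq_bot'.2 fun y (hy : A y = 0) ↦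
      by_contra fun hne ↦ hA y hne (by rw [hy, inner_zero_right])
  obtain ⟨κ, -, hκ⟩ := LinearMap.exists_antilipschitzWith _ hker
  exact ⟨κ, hκ⟩

theorem contDiff_gradient {E : Type*} [NormedAddCommGroup E] [InnerProductSpace ℝ E]
    [CompleteSpace E] {F : E → ℝ} {m n : WithTop ℕ∞} (hF : ContDiff ℝ n F) (hmn : m + 1 ≤ n) :
    ContDiff ℝ m (gradient F) :=
  (InnerProductSpace.toDual ℝ E).symm.contDiff.comp (hF.fderiv_right hmn)

/-- quadratic convergence of inexact Newton with forcing terms of order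
`O(‖∇F(x^t)‖)`. If `F` is twice continuously differentiable, `∇F(x*) = 0` with positive
definite Hessian at `x*`, the Hessian is `L`-Lipschitz on a ball of radius `ρ₀ > 0`
around `x*`, and the forcing terms satisfy `0 ≤ γ_t ≤ min(γ, c‖∇F(x^t)‖)` with
`0 ≤ γ < 1`, `c > 0`, then there exist `δ > 0` and `C' > 0` such that any such iterates
started with `‖x⁰ - x*‖ ≤ δ` converge to `x*` quadratically. -/
theorem inexact_newton_quadratic_convergence {p : ℕ}
    (F : EuclideanSpace ℝ (Fin p) → ℝ) (xs : EuclideanSpace ℝ (Fin p))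
    (γ c L ρ₀ : ℝ)
    (hF : ContDiff ℝ 2 F) (hcrit : gradient F xs = 0)
    (hpos : ∀ y : EuclideanSpace ℝ (Fin p), y ≠ 0 →
      0 < ⟪y, fderiv ℝ (gradient F) xs y⟫)
    (hρ₀ : 0 < ρ₀)
    (hLip : ∀ y ∈ Metric.ball xs ρ₀, ∀ z ∈ Metric.ball xs ρ₀,
      ‖fderiv ℝ (gradient F) y - fderiv ℝ (gradient F) z‖ ≤ L * ‖y - z‖)
    (hγ0 : 0 ≤ γ) (hγ1 : γ < 1) (hc : 0 < c) :
    ∃ δ > (0 : ℝ), ∃ C' > (0 : ℝ),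
      ∀ γseq : ℕ → ℝ, ∀ x : ℕ → EuclideanSpace ℝ (Fin p),
        (∀ t, 0 ≤ γseq t ∧ γseq t ≤ γ ∧ γseq t ≤ c * ‖gradient F (x t)‖) →
        (∀ t, ‖fderiv ℝ (gradient F) (x t) (x t - x (t + 1)) - gradient F (x t)‖ ≤
          γseq t * ‖gradient F (x t)‖) →
        ‖x 0 - xs‖ ≤ δ →
        Tendsto x atTop (nhds xs) ∧
          ∀ t, ‖fderiv ℝ (gradient F) xs (x (t + 1) - xs)‖ ≤
            C' * ‖fderiv ℝ (gradient F) xs (x t - xs)‖ ^ 2 := by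
  have hdiff : Differentiable ℝ (gradient F) :=
    (contDiff_gradient (m := 1) hF (by norm_num)).differentiable one_ne_zero
  have hhess : (fun y ↦ fderiv ℝ (gradient F) y - fderiv ℝ (gradient F) xs) =O[𝓝 xs]
      fun y ↦ y - xs :=
    .of_bound L <| eventually_of_mem (ball_mem_nhds xs hρ₀) fun y hy ↦
      hLip y hy xs (mem_ball_self hρ₀)
  obtain ⟨κ, hκ⟩ := exists_antilipschitzWith_of_inner_apply_ne_zero fun y hy ↦ (hpos y hy).ne'
  obtain ⟨δ, hδ, C, hC, hconv⟩ := inexact_newton_quadratic_convergence_general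
    (.of_forall fun y ↦ (hdiff y).hasFDerivAt) hhess hcrit hκ c
  refine ⟨δ, hδ, C, hC, fun γseq x hγ hres ↦ hconv x fun t ↦ (hres t).trans ?_⟩
  calc γseq t * ‖gradient F (x t)‖ ≤ c * ‖gradient F (x t)‖ * ‖gradient F (x t)‖ := by
        gcongr; exact (hγ t).2.2
    _ = c * ‖gradient F (x t)‖ ^ 2 := by ring
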